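/- arXiv:2102.02405 — 3 statements merged into one kernel-verified Lean document; each statement's English description precedes it below -/
import Mathlib

section
/- Every flag in X is K-equivalent to exactly one of the l flags F_1, …, F_l; that is, for every maximal isotropic flag F in ℂ^{2l} with dim(V_l ∩ U_l) ≡ l (mod 2) there is a unique i with 1 ≤ i ≤ l such that F = g·F_i for some g ∈ K. -/
open Module Submodule

noncomputable section

/-- `stdVec n m` is the `m`-th standard basis vector of `ℂ^n` (1-indexed); `0` out of range. -/
def stdVec (n m : ℕ) : Fin n → ℂ :=
  if h : 1 ≤ m ∧ m ≤ n then Pi.single (⟨m - 1, by omega⟩ : Fin n) 1 else 0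

/-- `stdSub n k` is the subspace `U_k = span(e_1, …, e_k)` of `ℂ^n`. -/
def stdSub (n k : ℕ) : Submodule ℂ (Fin n → ℂ) :=
  span ℂ (stdVec n '' Set.Icc 1 k)

/-- The action of an invertible linear map of `ℂ^n` on a chain of subspaces. -/
def actFlag (n : ℕ) (g : (Fin n → ℂ) ≃ₗ[ℂ] (Fin n → ℂ))
    (V : ℕ → Submodule ℂ (Fin n → ℂ)) (k : ℕ) : Submodule ℂ (Fin n → ℂ) :=
  Submodule.map g.toLinearMap (V k)

/-- The orbit of the chain `V` under a set `B` of invertible linear maps. -/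
def orbitOf (n : ℕ) (B : Set ((Fin n → ℂ) ≃ₗ[ℂ] (Fin n → ℂ)))
    (V : ℕ → Submodule ℂ (Fin n → ℂ)) : Set (ℕ → Submodule ℂ (Fin n → ℂ)) :=
  {V' | ∃ b ∈ B, actFlag n b V = V'}

/-- The symmetric bilinear form `β(x,y) = ∑_{k=1}^n x_k y_{n+1-k}` on `ℂ^n`. -/
def betaF (n : ℕ) (x y : Fin n → ℂ) : ℂ := ∑ k : Fin n, x k * y k.rev

/-- `SO(n,ℂ)` for the form `β`. -/
def SOgrp (n : ℕ) : Set ((Fin n → ℂ) ≃ₗ[ℂ] (Fin n → ℂ)) :=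
  {g | LinearMap.det g.toLinearMap = 1 ∧ ∀ x y, betaF n (g x) (g y) = betaF n x y}

/-- A maximal isotropic flag `V 1 ⊂ ⋯ ⊂ V l` in `ℂ^n` (values pinned outside `1..l`
so that two flags are equal iff they agree in degrees `1, …, l`). -/
def IsIsoFlag (n l : ℕ) (V : ℕ → Submodule ℂ (Fin n → ℂ)) : Prop :=
  (∀ i, i ≤ l → finrank ℂ ↥(V i) = i) ∧ (∀ i, V i ≤ V (i + 1)) ∧ (∀ i, l ≤ i → V i = V l) ∧
    (∀ u ∈ V l, ∀ w ∈ V l, betaF n u w = 0)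

/-- The isotropic flag `(v 1 ⊂ ⋯ ⊂ v l)` spanned by `v 1, …, v l`. -/
def isoFlagOf (n l : ℕ) (v : ℕ → Fin n → ℂ) (k : ℕ) : Submodule ℂ (Fin n → ℂ) :=
  span ℂ (v '' Set.Icc 1 (min k l))

/-- `K = {g ∈ SO(2l) : g (e_l - e_{-l}) = e_l - e_{-l}}` (here `e_{-l} = e_{l+1}`),
a copy of `SO(2l-1)`. -/
def Keven (l : ℕ) : Set ((Fin (2 * l) → ℂ) ≃ₗ[ℂ] (Fin (2 * l) → ℂ)) :=
  {g | g ∈ SOgrp (2 * l) ∧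
       g (stdVec (2 * l) l - stdVec (2 * l) (l + 1)) =
         stdVec (2 * l) l - stdVec (2 * l) (l + 1)}

/-- `V'` lies in the `K`-orbit of `V`. -/
def InKEvenOrbit (l : ℕ) (V V' : ℕ → Submodule ℂ (Fin (2 * l) → ℂ)) : Prop :=
  ∃ g ∈ Keven l, actFlag (2 * l) g V = V'

/-- Membership in `X`: maximal isotropic flags of `ℂ^{2l}` with
`dim (V_l ∩ U_l) ≡ l (mod 2)`. -/
def InXEven (l : ℕ) (V : ℕ → Submodule ℂ (Fin (2 * l) → ℂ)) : Prop :=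
  IsIsoFlag (2 * l) l V ∧ finrank ℂ ↥(V l ⊓ stdSub (2 * l) l) % 2 = l % 2

/-- `F_i = (e_1 ⊂ ⋯ ⊂ e_{i-1} ⊂ e_l ⊂ e_i ⊂ ⋯ ⊂ e_{l-1})` (`e_l` in position `i`). -/
def repEVec (l i m : ℕ) : Fin (2 * l) → ℂ :=
  if m < i then stdVec (2 * l) m
  else if m = i then stdVec (2 * l) l
  else stdVec (2 * l) (m - 1)

def repEFlag (l i : ℕ) : ℕ → Submodule ℂ (Fin (2 * l) → ℂ) :=
  isoFlagOf (2 * l) l (repEVec l i)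


/-! ### Abstract part: hyperbolic families -/

def HypFam {l : ℕ} {E : Type*} [AddCommGroup E] [Module ℂ E] (B : LinearMap.BilinForm ℂ E)
    (a b : Fin l → E) : Prop :=
  (∀ i j, B (a i) (a j) = 0) ∧ (∀ i j, B (b i) (b j) = 0) ∧
    ∀ i j, B (a i) (b j) = if i = j then 1 else 0

section abstractPart

variable {l : ℕ} {E : Type*} [AddCommGroup E] [Module ℂ E]

lemma HypFam.gram {B : LinearMap.BilinForm ℂ E} (hs : ∀ x y, B x y = B y x)
    {a b : Fin l → E} (h : HypFam B a b) (s t : Fin l ⊕ Fin l) :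
    B (Sum.elim a b s) (Sum.elim a b t) = if s = t.swap then 1 else 0 := by
  obtain ⟨h1, h2, h3⟩ := h
  rcases s with i | i <;> rcases t with j | j
  · simp [h1]
  · simp [h3]
  · simp only [Sum.elim_inr, Sum.elim_inl, Sum.swap_inl, Sum.inr.injEq]
    rw [hs, h3]; simp [eq_comm]
  · simp [h2]

lemma HypFam.linInd {B : LinearMap.BilinForm ℂ E} (hs : ∀ x y, B x y = B y x)
    {a b : Fin l → E} (h : HypFam B a b) : LinearIndependent ℂ (Sum.elim a b) := by
  rw [Fintype.linearIndependent_iff]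
  intro c hc t
  have := congrArg (fun x => B x (Sum.elim a b t.swap)) hc
  simp only [map_sum, map_smul, LinearMap.sum_apply, LinearMap.smul_apply, h.gram hs] at this
  simpa using this

lemma HypFam.exists_basis [FiniteDimensional ℂ E] {B : LinearMap.BilinForm ℂ E}
    (hs : ∀ x y, B x y = B y x) (hd : finrank ℂ E = 2 * l)
    {a b : Fin l → E} (h : HypFam B a b) :
    ∃ c : Basis (Fin l ⊕ Fin l) ℂ E, ⇑c = Sum.elim a b :=
  ⟨basisOfLinearIndependentOfCardEqFinrank' _ (h.linInd hs) (by simp [hd]; omega),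
    coe_basisOfLinearIndependentOfCardEqFinrank' _ _ _⟩

lemma HypFam.nondeg [FiniteDimensional ℂ E] {B : LinearMap.BilinForm ℂ E}
    (hs : ∀ x y, B x y = B y x) (hd : finrank ℂ E = 2 * l)
    {a b : Fin l → E} (h : HypFam B a b) : B.Nondegenerate := by
  obtain ⟨c, hc⟩ := h.exists_basis hs hd
  have key : ∀ x : E, (∀ y, B x y = 0) → x = 0 := by
    intro x hx
    apply c.repr.injective
    ext t
    have h1 := hx (Sum.elim a b t.swap)
    rw [← c.sum_repr x] at h1
    simp only [map_sum, map_smul, LinearMap.sum_apply, LinearMap.smul_apply, hc, h.gram hs] at h1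
    simpa using h1
  refine ⟨key, fun y hy => key y fun x => by rw [hs]; exact hy x⟩

/-- The isometry between two hyperbolic bases. -/
lemma HypFam.exists_isometry [FiniteDimensional ℂ E] {B : LinearMap.BilinForm ℂ E}
    (hs : ∀ x y, B x y = B y x) (hd : finrank ℂ E = 2 * l)
    {a b a' b' : Fin l → E} (h : HypFam B a b) (h' : HypFam B a' b') :
    ∃ g : E ≃ₗ[ℂ] E, (∀ x y, B (g x) (g y) = B x y) ∧ (∀ i, g (a i) = a' i) ∧
      ∀ i, g (b i) = b' i := by
  obtain ⟨c, hc⟩ := h.exists_basis hs hd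
  obtain ⟨c', hc'⟩ := h'.exists_basis hs hd
  have hg : ∀ t, c.equiv c' (Equiv.refl _) (Sum.elim a b t) = Sum.elim a' b' t := by
    intro t; rw [← hc, ← hc']; simp
  refine ⟨c.equiv c' (Equiv.refl _), ?_, fun i => hg (Sum.inl i), fun i => hg (Sum.inr i)⟩
  intro x y
  have : B.compl₁₂ (c.equiv c' (Equiv.refl _)).toLinearMap
      (c.equiv c' (Equiv.refl _)).toLinearMap = B := by
    apply LinearMap.ext_basis c c
    intro s t
    simp only [LinearMap.compl₁₂_apply, LinearEquiv.coe_coe, hc, hg, h.gram hs, h'.gram hs]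
  exact LinearMap.congr_fun₂ this x y

/-- An isometry preserving the Lagrangian `span a` has determinant one. -/
lemma HypFam.det_eq_one [FiniteDimensional ℂ E] {B : LinearMap.BilinForm ℂ E}
    (hs : ∀ x y, B x y = B y x) (hd : finrank ℂ E = 2 * l)
    {a b : Fin l → E} (h : HypFam B a b) (g : E ≃ₗ[ℂ] E)
    (hg : ∀ x y, B (g x) (g y) = B x y)
    (hU : (span ℂ (Set.range a)).map g.toLinearMap = span ℂ (Set.range a)) :
    LinearMap.det g.toLinearMap = 1 := by
  obtain ⟨c, hc⟩ := h.exists_basis hs hd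
  have hca : ∀ i, c (Sum.inl i) = a i := fun i => by rw [hc]; rfl
  have hcb : ∀ i, c (Sum.inr i) = b i := fun i => by rw [hc]; rfl
  obtain ⟨h1, h2, h3⟩ := id h
  have hra : ∀ x i, c.repr x (Sum.inl i) = B x (b i) := by
    intro x i
    conv_rhs => rw [← c.sum_repr x]
    have := fun s => h.gram hs s (Sum.inr i)
    simp only [Sum.elim_inr] at this
    simp only [map_sum, map_smul, LinearMap.sum_apply, LinearMap.smul_apply, hc, this]
    simp
  have hrb : ∀ x i, c.repr x (Sum.inr i) = B x (a i) := by
    intro x i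
    conv_rhs => rw [← c.sum_repr x]
    have := fun s => h.gram hs s (Sum.inl i)
    simp only [Sum.elim_inl] at this
    simp only [map_sum, map_smul, LinearMap.sum_apply, LinearMap.smul_apply, hc, this]
    simp
  have hiso : ∀ x ∈ span ℂ (Set.range a), ∀ i, B x (a i) = 0 := by
    intro x hx i
    induction hx using Submodule.span_induction with
    | mem x hx => obtain ⟨j, rfl⟩ := hx; exact h1 _ _
    | zero => simp
    | add x y _ _ hx hy => simp [hx, hy]
    | smul r x _ hx => simp [hx]
  have hga : ∀ j i, B (g (a j)) (a i) = 0 := by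
    intro j i
    apply hiso
    rw [← hU]
    exact Submodule.mem_map_of_mem (subset_span ⟨j, rfl⟩)
  set M := LinearMap.toMatrix c c g.toLinearMap with hM
  have hblk : M = Matrix.fromBlocks M.toBlocks₁₁ M.toBlocks₁₂ 0 M.toBlocks₂₂ := by
    conv_lhs => rw [← Matrix.fromBlocks_toBlocks M]
    congr 1
    ext i j
    simp [Matrix.toBlocks₂₁, hM, LinearMap.toMatrix_apply, hca, hrb, hga]
  have hmul : M.toBlocks₁₁.transpose * M.toBlocks₂₂ = 1 := by
    ext i j
    have e1 : B (g (a i)) (g (b j)) = if i = j then 1 else 0 := by rw [hg, h3]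
    rw [← c.sum_repr (g (a i))] at e1
    simp only [Fintype.sum_sum_type, hra, hrb, hga, zero_smul, Finset.sum_const_zero, add_zero,
      map_sum, map_smul, LinearMap.sum_apply, LinearMap.smul_apply, hca] at e1
    rw [Matrix.mul_apply, Matrix.one_apply, ← e1]
    refine Finset.sum_congr rfl fun k _ => ?_
    simp [Matrix.toBlocks₁₁, Matrix.toBlocks₂₂, hM, LinearMap.toMatrix_apply, hca, hcb, hra, hrb]
    left; exact hs _ _
  rw [← LinearMap.det_toMatrix c, ← hM, hblk, Matrix.det_fromBlocks_zero₂₁,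
    ← Matrix.det_transpose M.toBlocks₁₁, ← Matrix.det_mul, hmul, Matrix.det_one]

/-- A Lagrangian equals its orthogonal. -/
lemma lagr_mem [FiniteDimensional ℂ E] {B : LinearMap.BilinForm ℂ E}
    (hB : B.Nondegenerate) (hd : finrank ℂ E = 2 * l)
    (L : Submodule ℂ E) (hL : finrank ℂ L = l) (hi : ∀ x ∈ L, ∀ y ∈ L, B x y = 0)
    (x : E) (hx : ∀ y ∈ L, B y x = 0) : x ∈ L := by
  have hle : L ≤ B.orthogonal L := by
    intro y hy
    rw [LinearMap.BilinForm.mem_orthogonal_iff]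
    exact fun z hz => hi z hz y hy
  have := Submodule.eq_of_le_of_finrank_eq hle (by
    rw [LinearMap.BilinForm.finrank_orthogonal hB, hL, hd]; omega)
  rw [this, LinearMap.BilinForm.mem_orthogonal_iff]
  exact hx

/-- Determinant of an isometry from the dimension of the intersection. -/
lemma HypFam.det_parity [FiniteDimensional ℂ E] {B : LinearMap.BilinForm ℂ E}
    (hs : ∀ x y, B x y = B y x) (hd : finrank ℂ E = 2 * l)
    {a b : Fin l → E} (h : HypFam B a b) (k : ℕ) : ∀ (g : E ≃ₗ[ℂ] E)
    (_ : ∀ x y, B (g x) (g y) = B x y)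
    (_ : finrank ℂ ↥((span ℂ (Set.range a)).map g.toLinearMap ⊓ span ℂ (Set.range a)) + k = l),
    LinearMap.det g.toLinearMap = (-1) ^ k := by
  have hB := h.nondeg hs hd
  set U := span ℂ (Set.range a) with hUdef
  have hUf : finrank ℂ U = l := by
    have := (h.linInd hs).comp Sum.inl Sum.inl_injective
    rw [Sum.elim_comp_inl] at this
    rw [hUdef, finrank_span_eq_card this, Fintype.card_fin]
  have hUi : ∀ x ∈ U, ∀ y ∈ U, B x y = 0 := by
    intro x hx y hy
    have : ∀ i, B x (a i) = 0 := by
      intro i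
      induction hx using Submodule.span_induction with
      | mem x hx => obtain ⟨j, rfl⟩ := hx; exact h.1 _ _
      | zero => simp
      | add x y _ _ hx hy => simp [hx, hy]
      | smul r x _ hx => simp [hx]
    induction hy using Submodule.span_induction with
    | mem x hx => obtain ⟨j, rfl⟩ := hx; exact this _
    | zero => simp
    | add x y _ _ hx hy => simp [hx, hy]
    | smul r x _ hx => simp [hx]
  induction k with
  | zero =>
    intro g hg hf
    rw [pow_zero]
    refine h.det_eq_one hs hd g hg ?_
    rw [← hUdef]
    have hgf : finrank ℂ (U.map g.toLinearMap) = l := by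
      rw [← hUf]; exact LinearEquiv.finrank_map_eq g U
    have e1 := Submodule.eq_of_le_of_finrank_eq
      (inf_le_left : U.map g.toLinearMap ⊓ U ≤ U.map g.toLinearMap) (by omega)
    have e2 := Submodule.eq_of_le_of_finrank_eq
      (inf_le_right : U.map g.toLinearMap ⊓ U ≤ U) (by omega)
    exact e1.symm.trans e2
  | succ k ih =>
    intro g hg hf
    set L := U.map g.toLinearMap with hLdef
    have hLf : finrank ℂ L = l := by
      rw [← hUf]; exact LinearEquiv.finrank_map_eq g U
    have hLi : ∀ x ∈ L, ∀ y ∈ L, B x y = 0 := by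
      rintro _ ⟨x, hx, rfl⟩ _ ⟨y, hy, rfl⟩
      exact (hg x y).trans (hUi x hx y hy)
    have hnot : ¬ U ≤ L := by
      intro hle
      rw [inf_eq_right.mpr hle] at hf
      omega
    obtain ⟨u, huU, huL⟩ := SetLike.not_le_iff_exists.mp hnot
    obtain ⟨v0, hv0, hv0u⟩ : ∃ v0 ∈ L, B v0 u ≠ 0 := by
      by_contra! hcon
      exact huL (lagr_mem hB hd L hLf hLi u hcon)
    obtain ⟨v, hvL, hvu⟩ : ∃ v ∈ L, B v u = 1 :=
      ⟨(B v0 u)⁻¹ • v0, L.smul_mem _ hv0, by simp [hv0u]⟩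
    have huv : B u v = 1 := by rw [hs, hvu]
    have huu := hUi u huU u huU
    have hvv := hLi v hvL v hvL
    set r := u - v with hr
    have hrr : B r r = -2 := by
      simp only [hr, map_sub, LinearMap.sub_apply, huu, hvv, huv, hvu]; ring
    set s0 := LinearMap.transvection (B r) r with hs0
    have hs0a : ∀ x, s0 x = x + B r x • r := fun x => by
      simp [hs0, LinearMap.transvection.apply]
    have hinv : Function.Involutive s0 := by
      intro x
      simp only [hs0a, map_add, map_smul, smul_eq_mul, hrr]
      module
    let s : E ≃ₗ[ℂ] E := LinearEquiv.ofInvolutive s0 hinv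
    have hsa : ∀ x, s x = x + B r x • r := hs0a
    have hsl : s.toLinearMap = s0 := by ext x; rfl
    have hsd : LinearMap.det s.toLinearMap = -1 := by
      rw [hsl, hs0, LinearMap.transvection.det, hrr]; norm_num
    have hsg : ∀ x y, B (s x) (s y) = B x y := by
      intro x y
      simp only [hsa, map_add, map_smul, LinearMap.add_apply, LinearMap.smul_apply, smul_eq_mul,
        hrr, hs x r]
      ring
    have hmap : U.map (g.trans s).toLinearMap = L.map s.toLinearMap := by
      rw [hLdef, ← Submodule.map_comp]; rfl
    have hsu : s v = u := by
      rw [hsa]; simp only [hr, map_sub, LinearMap.sub_apply, huv, hvv]; simp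
    have hint : L.map s.toLinearMap ⊓ U = (L ⊓ U) ⊔ span ℂ {u} := by
      apply le_antisymm
      · rintro x ⟨⟨y, hy, rfl⟩, hxU⟩
        have hxU' : s y ∈ U := hxU
        have e : s y = (s y - B r y • u) + B r y • u := by abel
        change s y ∈ _
        rw [e]
        refine Submodule.add_mem_sup ⟨?_, ?_⟩ (Submodule.smul_mem _ _ (mem_span_singleton_self u))
        · have : s y - B r y • u = y - B r y • v := by
            rw [hsa, hr]; module
          rw [this]
          exact L.sub_mem hy (L.smul_mem _ hvL)
        · exact U.sub_mem hxU' (U.smul_mem _ huU)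
      · apply sup_le
        · rintro x ⟨hxL, hxU⟩
          refine ⟨⟨x, hxL, ?_⟩, hxU⟩
          change s x = x
          rw [hsa]
          simp [hr, hUi u huU x hxU, hLi v hvL x hxL]
        · rw [span_singleton_le_iff_mem]
          exact ⟨⟨v, hvL, hsu⟩, huU⟩
    have hfr : finrank ℂ ↥(L.map s.toLinearMap ⊓ U) = finrank ℂ ↥(L ⊓ U) + 1 := by
      have hu0 : u ≠ 0 := fun h0 => huL (h0 ▸ L.zero_mem)
      have hdis : (L ⊓ U) ⊓ span ℂ {u} = ⊥ := by
        rw [← disjoint_iff, Submodule.disjoint_span_singleton' hu0]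
        exact fun hh => huL hh.1
      have := Submodule.finrank_sup_add_finrank_inf_eq (L ⊓ U) (span ℂ {u})
      rw [hdis, finrank_bot, finrank_span_singleton hu0] at this
      rw [hint]; omega
    have := ih (g.trans s) (fun x y => by simp [hsg, hg]) (by rw [hmap, hfr]; omega)
    have hcomp : (g.trans s).toLinearMap = s.toLinearMap ∘ₗ g.toLinearMap := rfl
    rw [hcomp, LinearMap.det_comp, hsd] at this
    rw [pow_succ, ← this]; ring

/-- Witt-type extension: a Lagrangian basis `a` with a prescribed isotropic partner of one vector. -/
lemma exists_hypFam [FiniteDimensional ℂ E] {B : LinearMap.BilinForm ℂ E}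
    (hs : ∀ x y, B x y = B y x) (hB : B.Nondegenerate) (a : Fin l → E)
    (ha : LinearIndependent ℂ a) (hi : ∀ i j, B (a i) (a j) = 0) (i0 : Fin l) (z : E)
    (hz : B z z = 0) (hza : ∀ i, B (a i) z = if i = i0 then 1 else 0) :
    ∃ b : Fin l → E, HypFam B a b ∧ b i0 = z := by
  obtain ⟨p, hp⟩ := (Finsupp.linearCombination ℂ a).exists_leftInverse_of_injective
    (LinearMap.ker_eq_bot.mpr ha)
  have hpa : ∀ i, p (a i) = Finsupp.single i 1 := by
    intro i
    have := LinearMap.congr_fun hp (Finsupp.single i 1)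
    simpa using this
  let d : Fin l → E := fun j => (B.toDual hB).symm (Finsupp.lapply j ∘ₗ p)
  have hd : ∀ i j, B (a i) (d j) = if i = j then 1 else 0 := by
    intro i j
    rw [hs, ← LinearMap.BilinForm.toDual_def hB]
    simp [d, hpa, Finsupp.single_apply]
  let d' : Fin l → E := fun j => if j = i0 then z else d j - B (d j) z • a i0
  have hd' : ∀ i j, B (a i) (d' j) = if i = j then 1 else 0 := by
    intro i j
    by_cases hj : j = i0
    · simp [d', hj, hza]
    · simp [d', hj, hd, hi]
  have hd'z : ∀ j, B (d' j) z = 0 := by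
    intro j
    by_cases hj : j = i0
    · simp [d', hj, hz]
    · simp [d', hj, hza]
  refine ⟨fun j => d' j - (1 / 2 : ℂ) • ∑ k, B (d' j) (d' k) • a k, ⟨hi, ?_, ?_⟩, ?_⟩
  · intro i j
    have hd'' : ∀ i j, B (d' i) (a j) = if j = i then 1 else 0 := fun i j => by rw [hs, hd']
    simp only [map_sub, map_smul, map_sum, LinearMap.sub_apply, LinearMap.smul_apply,
      LinearMap.sum_apply, hd', hd'', hi, smul_eq_mul]
    simp [hs (d' j) (d' i)]
    ring
  · intro i j
    simp [hd', hi]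
  · have hz' : d' i0 = z := by simp [d']
    simp only [hz']
    have : ∀ k, B z (d' k) = 0 := fun k => by rw [hs, hd'z]
    simp [this]

end abstractPart

/-- Adapted vectors for a flag and a linear functional. -/
lemma exists_adapted {E : Type*} [AddCommGroup E] [Module ℂ E] [FiniteDimensional ℂ E] (l : ℕ)
    (V : ℕ → Submodule ℂ E) (hf : ∀ i, i ≤ l → finrank ℂ ↥(V i) = i) (hm : ∀ i, V i ≤ V (i + 1))
    (f : E →ₗ[ℂ] ℂ) (i : ℕ) (hil : i ≤ l)
    (hlt : ∀ k < i, ∀ x ∈ V k, f x = 0) (hi : ∃ x ∈ V i, f x ≠ 0) :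
    ∃ v : ℕ → E, (∀ k, k ≤ l → span ℂ (v '' Set.Icc 1 k) = V k) ∧ f (v i) = -1 ∧
      ∀ k, 1 ≤ k → k ≤ l → k ≠ i → f (v k) = 0 := by
  have hmono : Monotone V := monotone_nat_of_le_succ hm
  obtain ⟨x, hxV, hx⟩ : ∃ x ∈ V i, f x = -1 := by
    obtain ⟨x, hxV, hx⟩ := hi
    exact ⟨(-(f x)⁻¹) • x, (V i).smul_mem _ hxV, by simp [hx]⟩
  have hex : ∀ k, ∃ y, (1 ≤ k → k ≤ l → y ∈ V k ∧ y ∉ V (k - 1)) ∧ (k = i → f y = -1) ∧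
      (1 ≤ k → k ≤ l → k ≠ i → f y = 0) := by
    intro k
    by_cases hki : k = i
    · subst hki
      refine ⟨x, fun h1 _ => ⟨hxV, fun hx' => ?_⟩, fun _ => hx, fun _ _ h => absurd rfl h⟩
      have := hlt (k - 1) (by omega) x hx'
      rw [hx] at this
      norm_num at this
    · by_cases hk : 1 ≤ k ∧ k ≤ l
      · obtain ⟨hk1, hkl⟩ := hk
        have hnot : ¬ V k ≤ V (k - 1) := by
          intro hle
          have := Submodule.finrank_mono hle
          rw [hf _ hkl, hf _ (by omega)] at this
          omega
        obtain ⟨y, hy, hy'⟩ := SetLike.not_le_iff_exists.mp hnot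
        rcases lt_or_gt_of_ne hki with h | h
        · exact ⟨y, fun _ _ => ⟨hy, hy'⟩, fun h' => absurd h' hki, fun _ _ _ => hlt k h y hy⟩
        · refine ⟨y + f y • x, fun _ _ => ⟨?_, ?_⟩, fun h' => absurd h' hki, fun _ _ _ => ?_⟩
          · exact (V k).add_mem hy ((V k).smul_mem _ (hmono h.le hxV))
          · intro hc
            apply hy'
            have hx' : x ∈ V (k - 1) := hmono (by omega) hxV
            have := (V (k - 1)).sub_mem hc ((V (k - 1)).smul_mem (f y) hx')
            simpa using this
          · simp [hx]
      · exact ⟨0, fun h1 h2 => absurd ⟨h1, h2⟩ hk, fun h' => absurd h' hki, fun _ _ _ => by simp⟩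
  choose v hv1 hv2 hv3 using hex
  refine ⟨v, ?_, hv2 i rfl, hv3⟩
  intro k
  induction k with
  | zero =>
    intro _
    have : V 0 = ⊥ := Submodule.finrank_eq_zero.mp (hf 0 (by omega))
    simp [this]
  | succ k ih =>
    intro hk
    have hI : Set.Icc 1 (k + 1) = insert (k + 1) (Set.Icc 1 k) := by
      ext t; simp only [Set.mem_Icc, Set.mem_insert_iff]; omega
    obtain ⟨hy, hy'⟩ := hv1 (k + 1) (by omega) hk
    rw [Nat.add_sub_cancel] at hy'
    rw [hI, Set.image_insert_eq, span_insert, ih (by omega)]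
    apply Submodule.eq_of_le_of_finrank_le
    · exact sup_le ((span_singleton_le_iff_mem _ _).mpr hy) (hm k)
    · have hlt' : V k < span ℂ {v (k + 1)} ⊔ V k := by
        refine lt_of_le_of_ne le_sup_right fun he => hy' ?_
        rw [he]
        exact Submodule.mem_sup_left (mem_span_singleton_self _)
      have := Submodule.finrank_lt_finrank_of_lt hlt'
      rw [hf k (by omega)] at this
      rw [hf _ hk]
      omega

/-! ### The concrete form -/

def betaB (n : ℕ) : LinearMap.BilinForm ℂ (Fin n → ℂ) :=
  LinearMap.mk₂ ℂ (betaF n)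
    (by intro x y z; simp [betaF, add_mul, Finset.sum_add_distrib])
    (by intro c x y; simp [betaF, Finset.mul_sum, mul_assoc])
    (by intro x y z; simp [betaF, mul_add, Finset.sum_add_distrib])
    (by intro c x y; simp [betaF, Finset.mul_sum, mul_left_comm])

lemma betaB_apply (n : ℕ) (x y : Fin n → ℂ) : betaB n x y = betaF n x y := rfl

lemma betaB_symm (n : ℕ) (x y : Fin n → ℂ) : betaB n x y = betaB n y x := by
  simp only [betaB_apply, betaF]
  rw [← Equiv.sum_comp Fin.revPerm]
  refine Finset.sum_congr rfl fun k _ => ?_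
  simp [mul_comm]

lemma betaB_std (n a b : ℕ) (ha : 1 ≤ a) (ha' : a ≤ n) (hb : 1 ≤ b) (hb' : b ≤ n) :
    betaB n (stdVec n a) (stdVec n b) = if a + b = n + 1 then 1 else 0 := by
  rw [betaB_apply, betaF, stdVec, stdVec, dif_pos ⟨ha, ha'⟩, dif_pos ⟨hb, hb'⟩]
  rw [Finset.sum_eq_single (⟨a - 1, by omega⟩ : Fin n)]
  · rw [Pi.single_eq_same, one_mul, Pi.single_apply]
    refine if_congr ?_ rfl rfl
    rw [Fin.ext_iff, Fin.val_rev]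
    simp only
    omega
  · intro k _ hk
    rw [Pi.single_eq_of_ne hk, zero_mul]
  · simp

def eVec (l : ℕ) (i : Fin l) : Fin (2 * l) → ℂ := stdVec (2 * l) (i + 1)
def fVec (l : ℕ) (i : Fin l) : Fin (2 * l) → ℂ := stdVec (2 * l) (2 * l - i)

lemma hyp_std (l : ℕ) : HypFam (betaB (2 * l)) (eVec l) (fVec l) := by
  refine ⟨fun i j => ?_, fun i j => ?_, fun i j => ?_⟩
  all_goals
    have hi := i.2
    have hj := j.2
    simp only [eVec, fVec]
    rw [betaB_std _ _ _ (by omega) (by omega) (by omega) (by omega)]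
  · rw [if_neg]; omega
  · rw [if_neg]; omega
  · refine if_congr ?_ rfl rfl
    rw [Fin.ext_iff]; omega

lemma stdSub_eq (l : ℕ) : stdSub (2 * l) l = span ℂ (Set.range (eVec l)) := by
  rw [stdSub]
  congr 1
  ext x
  constructor
  · rintro ⟨m, ⟨h1, h2⟩, rfl⟩
    refine ⟨⟨m - 1, by omega⟩, ?_⟩
    simp only [eVec]
    congr 1; omega
  · rintro ⟨i, rfl⟩
    exact ⟨i + 1, ⟨by omega, i.2⟩, rfl⟩

def wVec (l : ℕ) : Fin (2 * l) → ℂ := stdVec (2 * l) l - stdVec (2 * l) (l + 1)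

lemma w_std (l m : ℕ) (h1 : 1 ≤ m) (h2 : m ≤ l) :
    betaB (2 * l) (wVec l) (stdVec (2 * l) m) = if m = l then -1 else 0 := by
  rw [wVec, map_sub, LinearMap.sub_apply, betaB_std _ _ _ (by omega) (by omega) (by omega) (by omega),
    betaB_std _ _ _ (by omega) (by omega) (by omega) (by omega), if_neg (by omega), zero_sub]
  by_cases h : m = l
  · rw [if_pos (by omega), if_pos h]
  · rw [if_neg (by omega), if_neg h, neg_zero]

lemma w_w (l : ℕ) (hl : 1 ≤ l) : betaB (2 * l) (wVec l) (wVec l) = -2 := by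
  simp only [wVec, map_sub, LinearMap.sub_apply]
  rw [betaB_std _ l l (by omega) (by omega) (by omega) (by omega),
    betaB_std _ l (l + 1) (by omega) (by omega) (by omega) (by omega),
    betaB_std _ (l + 1) l (by omega) (by omega) (by omega) (by omega),
    betaB_std _ (l + 1) (l + 1) (by omega) (by omega) (by omega) (by omega),
    if_neg (show ¬ l + l = 2 * l + 1 by omega), if_pos (show l + (l + 1) = 2 * l + 1 by omega),
    if_pos (show l + 1 + l = 2 * l + 1 by omega),
    if_neg (show ¬ l + 1 + (l + 1) = 2 * l + 1 by omega)]
  norm_num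

lemma w_rep (l i m : ℕ) (hi : 1 ≤ i) (hil : i ≤ l) (h1 : 1 ≤ m) (h2 : m ≤ l) :
    betaB (2 * l) (wVec l) (repEVec l i m) = if m = i then -1 else 0 := by
  rw [repEVec]
  split_ifs with h h' h'
  · omega
  · rw [w_std _ _ (by omega) (by omega), if_neg (by omega)]
  · rw [w_std _ _ (by omega) (by omega), if_pos rfl]
  · rw [w_std _ _ (by omega) (by omega), if_neg (by omega)]

/-- The orbit invariant. -/
lemma orbit_inv (l : ℕ) (V : ℕ → Submodule ℂ (Fin (2 * l) → ℂ)) (i : ℕ) (hi : 1 ≤ i)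
    (hil : i ≤ l) (h : InKEvenOrbit l (repEFlag l i) V) :
    (∀ k < i, ∀ x ∈ V k, betaB (2 * l) (wVec l) x = 0) ∧
      ∃ x ∈ V i, betaB (2 * l) (wVec l) x ≠ 0 := by
  obtain ⟨g, ⟨⟨_, hg⟩, hgw⟩, rfl⟩ := h
  have hgw' : g (wVec l) = wVec l := hgw
  have hinv : ∀ y, betaB (2 * l) (wVec l) (g y) = betaB (2 * l) (wVec l) y := by
    intro y
    conv_lhs => rw [← hgw']
    exact hg _ _
  constructor
  · rintro k hk _ ⟨y, hy, rfl⟩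
    change betaB (2 * l) (wVec l) (g y) = 0
    rw [hinv]
    change y ∈ span ℂ (repEVec l i '' Set.Icc 1 (min k l)) at hy
    induction hy using Submodule.span_induction with
    | mem x hx =>
      obtain ⟨m, ⟨h1, h2⟩, rfl⟩ := hx
      have := le_min_iff.mp h2
      rw [w_rep l i m hi hil h1 this.2, if_neg (by omega)]
    | zero => simp
    | add x y _ _ hx hy => rw [map_add, hx, hy, add_zero]
    | smul r x _ hx => rw [map_smul, hx, smul_zero]
  · refine ⟨g (repEVec l i i), ⟨repEVec l i i, ?_, rfl⟩, ?_⟩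
    · exact subset_span ⟨i, ⟨hi, le_min le_rfl hil⟩, rfl⟩
    · rw [hinv, w_rep l i i hi hil hi hil, if_pos rfl]
      norm_num

/-- Existence of the representative. -/
lemma orbit_exists (l : ℕ) (V : ℕ → Submodule ℂ (Fin (2 * l) → ℂ)) (hV : InXEven l V)
    (i : ℕ) (hi : 1 ≤ i) (hil : i ≤ l)
    (hlt : ∀ k < i, ∀ x ∈ V k, betaB (2 * l) (wVec l) x = 0)
    (hne : ∃ x ∈ V i, betaB (2 * l) (wVec l) x ≠ 0) :
    InKEvenOrbit l (repEFlag l i) V := by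
  obtain ⟨⟨hf, hm, hpin, hiso⟩, hpar⟩ := hV
  have hd : finrank ℂ (Fin (2 * l) → ℂ) = 2 * l := by simp
  have hs := betaB_symm (2 * l)
  have hB := (hyp_std l).nondeg hs hd
  obtain ⟨v, hspan, hvi, hvk⟩ := exists_adapted l V hf hm (betaB (2 * l) (wVec l)) i hil hlt hne
  let a : Fin l → (Fin (2 * l) → ℂ) := fun j =>
    if (j : ℕ) + 1 < i then v (j + 1) else if (j : ℕ) + 1 < l then v (j + 2) else v i
  have ha1 : ∀ j : Fin l, (j : ℕ) + 1 < i → a j = v (j + 1) := fun j h => if_pos h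
  have ha2 : ∀ j : Fin l, i ≤ (j : ℕ) + 1 → (j : ℕ) + 1 < l → a j = v (j + 2) :=
    fun j h h' => by simp only [a]; rw [if_neg (by omega), if_pos h']
  have ha3 : ∀ j : Fin l, (j : ℕ) + 1 = l → a j = v i :=
    fun j h => by simp only [a]; rw [if_neg (by omega), if_neg (by omega)]
  have hrange : Set.range a = v '' Set.Icc 1 l := by
    ext x
    constructor
    · rintro ⟨j, rfl⟩
      have hj := j.2
      rcases lt_or_ge ((j : ℕ) + 1) i with h | h
      · rw [ha1 j h]; exact ⟨_, ⟨by omega, by omega⟩, rfl⟩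
      · rcases lt_or_ge ((j : ℕ) + 1) l with h' | h'
        · rw [ha2 j h h']; exact ⟨_, ⟨by omega, by omega⟩, rfl⟩
        · rw [ha3 j (by omega)]; exact ⟨_, ⟨hi, hil⟩, rfl⟩
    · rintro ⟨m, ⟨h1, h2⟩, rfl⟩
      rcases lt_trichotomy m i with h | h | h
      · refine ⟨⟨m - 1, by omega⟩, ?_⟩
        rw [ha1 _ (by simp only; omega)]
        congr 1; simp only; omega
      · refine ⟨⟨l - 1, by omega⟩, ?_⟩
        rw [ha3 _ (by simp only; omega), h]
      · refine ⟨⟨m - 2, by omega⟩, ?_⟩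
        rw [ha2 _ (by simp only; omega) (by simp only; omega)]
        congr 1; simp only; omega
  have haspan : span ℂ (Set.range a) = V l := by rw [hrange, hspan l le_rfl]
  have hind : LinearIndependent ℂ a := by
    rw [linearIndependent_iff_card_eq_finrank_span, Set.finrank, haspan, hf l le_rfl,
      Fintype.card_fin]
  have haV : ∀ j, a j ∈ V l := fun j => haspan ▸ subset_span ⟨j, rfl⟩
  have hai : ∀ j k, betaB (2 * l) (a j) (a k) = 0 := fun j k => hiso _ (haV j) _ (haV k)
  let i0 : Fin l := ⟨l - 1, by omega⟩
  have hai0 : a i0 = v i := ha3 i0 (by simp only [i0]; omega)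
  have haw : ∀ j, betaB (2 * l) (a j) (wVec l) = if j = i0 then -1 else 0 := by
    intro j
    have hj := j.2
    rw [hs]
    by_cases hj0 : j = i0
    · rw [if_pos hj0, hj0, hai0, hvi]
    · have hj1 : (j : ℕ) ≠ l - 1 := fun h => hj0 (Fin.ext h)
      rw [if_neg hj0]
      rcases lt_or_ge ((j : ℕ) + 1) i with h | h
      · rw [ha1 j h]; exact hvk _ (by omega) (by omega) (by omega)
      · rw [ha2 j h (by omega)]; exact hvk _ (by omega) (by omega) (by omega)
  have hvv : betaB (2 * l) (v i) (v i) = 0 := by rw [← hai0]; exact hai _ _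
  have hvw : betaB (2 * l) (v i) (wVec l) = -1 := by rw [← hai0, haw, if_pos rfl]
  obtain ⟨b, hab, hbz⟩ := exists_hypFam hs hB a hind hai i0 (v i - wVec l)
    (by
      simp only [map_sub, LinearMap.sub_apply, hvv, hvw, hvi, w_w l (by omega)]
      norm_num)
    (by
      intro j
      rw [map_sub, haw, ← hai0, hai]
      split_ifs <;> simp)
  obtain ⟨g, hg, hge, hgf⟩ := (hyp_std l).exists_isometry hs hd hab
  have hgl : ∀ m, 1 ≤ m → m ≤ l → g (repEVec l i m) = v m := by
    intro m h1 h2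
    rw [repEVec]
    split_ifs with h h'
    · have := hge ⟨m - 1, by omega⟩
      rw [ha1 _ (by simp only; omega)] at this
      simpa [eVec, Nat.sub_add_cancel h1] using this
    · have := hge i0
      rw [hai0] at this
      rw [h', ← this, eVec]
      congr 2; simp only [i0]; omega
    · have := hge ⟨m - 2, by omega⟩
      rw [ha2 _ (by simp only; omega) (by simp only; omega)] at this
      simp only [eVec] at this
      rw [show m - 2 + 1 = m - 1 by omega, show m - 2 + 2 = m by omega] at this
      exact this
  have hgw : g (wVec l) = wVec l := by
    have : wVec l = eVec l i0 - fVec l i0 := by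
      simp only [wVec, eVec, fVec, i0]
      congr 2 <;> omega
    conv_lhs => rw [this]
    rw [map_sub, hge, hgf, hbz, hai0]
    abel
  have hmapU : (span ℂ (Set.range (eVec l))).map g.toLinearMap = V l := by
    rw [Submodule.map_span, ← haspan, ← Set.range_comp]
    congr 2
    ext1 j
    exact hge j
  refine ⟨g, ⟨⟨?_, hg⟩, hgw⟩, ?_⟩
  · have hle : finrank ℂ ↥(V l ⊓ stdSub (2 * l) l) ≤ l := by
      have := Submodule.finrank_mono (inf_le_left : V l ⊓ stdSub (2 * l) l ≤ V l)
      rwa [hf l le_rfl] at this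
    have := (hyp_std l).det_parity hs hd (l - finrank ℂ ↥(V l ⊓ stdSub (2 * l) l)) g hg
      (by rw [hmapU, ← stdSub_eq]; omega)
    rw [this]
    apply Even.neg_one_pow
    rw [Nat.even_iff]; omega
  · funext k
    have key : ∀ k, k ≤ l → actFlag (2 * l) g (repEFlag l i) k = V k := by
      intro k hk
      rw [actFlag, repEFlag, isoFlagOf, min_eq_left hk, Submodule.map_span, ← hspan k hk,
        ← Set.image_comp]
      congr 1
      apply Set.image_congr
      rintro m ⟨h1, h2⟩
      exact hgl m h1 (h2.trans hk)
    rcases le_total k l with hk | hk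
    · exact key k hk
    · rw [hpin k hk, ← key l le_rfl]
      simp only [actFlag, repEFlag, isoFlagOf, min_eq_right hk, min_self]

/-- Every flag in `X` is `K`-equivalent to exactly one of the `l` flags `F_1, …, F_l`. -/
theorem stmt_5 (l : ℕ) (hl : 2 ≤ l) (V : ℕ → Submodule ℂ (Fin (2 * l) → ℂ))
    (hV : InXEven l V) :
    ∃! i : ℕ, (1 ≤ i ∧ i ≤ l) ∧ InKEvenOrbit l (repEFlag l i) V := by
  classical
  have hd : finrank ℂ (Fin (2 * l) → ℂ) = 2 * l := by simp
  have hB := (hyp_std l).nondeg (betaB_symm (2 * l)) hd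
  have hV0 := hV
  obtain ⟨⟨hf, hm, hpin, hiso⟩, hpar⟩ := hV0
  have hexl : ∃ x ∈ V l, betaB (2 * l) (wVec l) x ≠ 0 := by
    by_contra! hcon
    have hw := lagr_mem hB hd (V l) (hf l le_rfl) hiso (wVec l)
      (fun y hy => by rw [betaB_symm]; exact hcon y hy)
    have := hcon _ hw
    rw [w_w l (by omega)] at this
    norm_num at this
  have hex : ∃ i, ∃ x ∈ V i, betaB (2 * l) (wVec l) x ≠ 0 := ⟨l, hexl⟩
  have hmin : ∀ k < Nat.find hex, ∀ x ∈ V k, betaB (2 * l) (wVec l) x = 0 := by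
    intro k hk x hx
    by_contra hne
    exact Nat.find_min hex hk ⟨x, hx, hne⟩
  have h1 : 1 ≤ Nat.find hex := by
    rw [Nat.one_le_iff_ne_zero]
    intro h0
    obtain ⟨x, hx, hne⟩ := Nat.find_spec hex
    rw [h0, Submodule.finrank_eq_zero.mp (hf 0 (by omega)), Submodule.mem_bot] at hx
    exact hne (by simp [hx])
  have h2 : Nat.find hex ≤ l := Nat.find_min' hex hexl
  refine ⟨Nat.find hex, ⟨⟨h1, h2⟩, orbit_exists l V hV _ h1 h2 hmin (Nat.find_spec hex)⟩, ?_⟩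
  rintro j ⟨⟨hj1, hjl⟩, hj⟩
  obtain ⟨hj2, x, hx, hne⟩ := orbit_inv l V j hj1 hjl hj
  apply le_antisymm
  · by_contra! hlt
    obtain ⟨y, hy, hyne⟩ := Nat.find_spec hex
    exact hyne (hj2 _ hlt y hy)
  · exact Nat.find_min' hex ⟨x, hx, hne⟩
end
end

section
/- Let n ≥ 3 and let F_y be the complete flag (e_{n-1}+e_n ⊂ e_1 ⊂ e_2 ⊂ ⋯ ⊂ e_{n-2} ⊂ e_n) in ℂ^n. Then the stabilizer of F_y in K, namely {g ∈ K : g·F_y = F_y}, equals B_{n-2} := {g ∈ GL(n,ℂ) : g e_{n-1} = e_{n-1}, g e_n = e_n, and g U_k = U_k for all 1 ≤ k ≤ n-2}. -/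
open Module Submodule

noncomputable section

/-- A complete flag in `ℂ^n`: `V k` is the `k`-dimensional member for `0 ≤ k ≤ n`;
values above `n` are pinned so that two flags are equal iff they agree in degrees `≤ n`. -/
def IsCompleteFlag (n : ℕ) (V : ℕ → Submodule ℂ (Fin n → ℂ)) : Prop :=
  (∀ k, k ≤ n → finrank ℂ ↥(V k) = k) ∧ (∀ k, V k ≤ V (k + 1)) ∧ (∀ k, n ≤ k → V k = V n)

/-- The complete flag `(v 1 ⊂ v 2 ⊂ ⋯ ⊂ v n)` spanned by the vectors `v 1, …, v n`. -/
def flagOf (n : ℕ) (v : ℕ → Fin n → ℂ) (k : ℕ) : Submodule ℂ (Fin n → ℂ) :=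
  span ℂ (v '' Set.Icc 1 (min k n))

/-- `K = {g ∈ GL(n,ℂ) : g e_n = e_n, g U_{n-1} = U_{n-1}}`, a copy of `GL(n-1,ℂ)`. -/
def Ksub (n : ℕ) : Set ((Fin n → ℂ) ≃ₗ[ℂ] (Fin n → ℂ)) :=
  {g | g (stdVec n n) = stdVec n n ∧
       Submodule.map g.toLinearMap (stdSub n (n - 1)) = stdSub n (n - 1)}

/-- `V'` lies in the `K`-orbit of `V`. -/
def InKOrbit (n : ℕ) (V V' : ℕ → Submodule ℂ (Fin n → ℂ)) : Prop :=
  ∃ g ∈ Ksub n, actFlag n g V = V'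

/-- Vectors of the representative flags: for `i = j` this gives the flag `F_i`
`(e_1 ⊂ ⋯ ⊂ e_{i-1} ⊂ e_n ⊂ e_i ⊂ ⋯ ⊂ e_{n-1})` (`e_n` in position `i`), and for
`i < j` the flag `F_{i,j}`
`(e_1 ⊂ ⋯ ⊂ e_{i-1} ⊂ e_i + e_n ⊂ e_{i+1} ⊂ ⋯ ⊂ e_{j-1} ⊂ e_n ⊂ e_j ⊂ ⋯ ⊂ e_{n-1})`. -/
def repVec (n i j m : ℕ) : Fin n → ℂ :=
  if m < i then stdVec n m
  else if m = i then (if i < j then stdVec n i else 0) + stdVec n n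
  else if m < j then stdVec n m
  else if m = j then stdVec n n
  else stdVec n (m - 1)

/-- `repFlag n i i = F_i` and `repFlag n i j = F_{i,j}` for `i < j`. -/
def repFlag (n i j : ℕ) : ℕ → Submodule ℂ (Fin n → ℂ) := flagOf n (repVec n i j)

/-- The flag `F_y = (e_{n-1} + e_n ⊂ e_1 ⊂ e_2 ⊂ ⋯ ⊂ e_{n-2} ⊂ e_n)`. -/
def FyVec (n m : ℕ) : Fin n → ℂ :=
  if m = 1 then stdVec n (n - 1) + stdVec n n
  else if m = n then stdVec n n
  else stdVec n (m - 1)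

def FyFlag (n : ℕ) : ℕ → Submodule ℂ (Fin n → ℂ) := flagOf n (FyVec n)

lemma aux_span_succ {n : ℕ} (v : ℕ → Fin n → ℂ) (k : ℕ) :
    span ℂ (v '' Set.Icc 1 (k + 1)) = span ℂ (v '' Set.Icc 1 k) ⊔ span ℂ {v (k + 1)} := by
  rw [← span_union, ← Set.image_singleton, ← Set.image_union]
  congr 2
  ext x
  simp only [Set.mem_Icc, Set.mem_union, Set.mem_singleton_iff]
  omega

lemma aux_stdSub_zero (n : ℕ) : stdSub n 0 = ⊥ := by
  simp [stdSub]

lemma aux_flag (n : ℕ) (hn : 3 ≤ n) (k : ℕ) (hk : k ≤ n - 2) :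
    FyFlag n (k + 1) = span ℂ {stdVec n (n - 1) + stdVec n n} ⊔ stdSub n k := by
  have key : ∀ k, k ≤ n - 2 → span ℂ (FyVec n '' Set.Icc 1 (k + 1)) =
      span ℂ {stdVec n (n - 1) + stdVec n n} ⊔ stdSub n k := by
    intro k
    induction k with
    | zero => intro _; simp [stdSub, FyVec]
    | succ k ih =>
      intro h
      rw [aux_span_succ, ih (by omega), stdSub, stdSub, aux_span_succ, sup_assoc]
      have : FyVec n (k + 1 + 1) = stdVec n (k + 1) := by
        unfold FyVec
        rw [if_neg (by omega), if_neg (by omega)]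
        rfl
      rw [this]
  rw [FyFlag, flagOf, min_eq_left (by omega), key k hk]

lemma aux_flag_top (n : ℕ) (hn : 3 ≤ n) (k : ℕ) (hk : n ≤ k) :
    FyFlag n k = FyFlag n (n - 1) ⊔ span ℂ {stdVec n n} := by
  obtain ⟨m, rfl⟩ : ∃ m, n = m + 1 := ⟨n - 1, by omega⟩
  rw [FyFlag, flagOf, flagOf, min_eq_right hk, aux_span_succ, min_eq_left (by omega)]
  have : FyVec (m + 1) (m + 1) = stdVec (m + 1) (m + 1) := by
    unfold FyVec
    rw [if_neg (by omega), if_pos rfl]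
  rw [this]
  rfl

lemma aux_flag_zero (n : ℕ) : FyFlag n 0 = ⊥ := by
  simp [FyFlag, flagOf]

lemma aux_last_self (n : ℕ) (hn : 3 ≤ n) : stdVec n n ⟨n - 1, by omega⟩ = 1 := by
  unfold stdVec
  rw [dif_pos (by omega)]
  simp

lemma aux_last_ne (n : ℕ) (hn : 3 ≤ n) (m : ℕ) (hm : m ≤ n - 1) :
    stdVec n m ⟨n - 1, by omega⟩ = 0 := by
  unfold stdVec
  split_ifs with h
  · rw [Pi.single_apply, if_neg]
    simp only [Fin.mk.injEq]
    omega
  · rfl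

lemma aux_last_sub (n : ℕ) (hn : 3 ≤ n) (m : ℕ) (hm : m ≤ n - 1) (x : Fin n → ℂ)
    (hx : x ∈ stdSub n m) : x ⟨n - 1, by omega⟩ = 0 := by
  have : stdSub n m ≤ LinearMap.ker (LinearMap.proj (R := ℂ) (φ := fun _ : Fin n => ℂ)
      (⟨n - 1, by omega⟩ : Fin n)) := by
    rw [stdSub, span_le]
    rintro _ ⟨j, hj, rfl⟩
    exact aux_last_ne n hn j (hj.2.trans hm)
  exact this hx

lemma aux_sub_succ (n : ℕ) (hn : 3 ≤ n) :
    stdSub n (n - 1) = stdSub n (n - 2) ⊔ span ℂ {stdVec n (n - 1)} := by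
  obtain ⟨m, rfl⟩ : ∃ m, n = m + 2 := ⟨n - 2, by omega⟩
  exact aux_span_succ _ m

lemma aux_map_single {n : ℕ} (g : (Fin n → ℂ) ≃ₗ[ℂ] (Fin n → ℂ)) (x : Fin n → ℂ)
    (h : g x = x) : Submodule.map g.toLinearMap (span ℂ {x}) = span ℂ {x} := by
  rw [map_span, Set.image_singleton]
  simp [h]

lemma aux_sub_mono (n : ℕ) {k l : ℕ} (h : k ≤ l) : stdSub n k ≤ stdSub n l :=
  span_mono (Set.image_mono (Set.Icc_subset_Icc_right h))

/-- The stabilizer of `F_y` in `K` is `B_{n-2}`. -/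
theorem stmt_6 (n : ℕ) (hn : 3 ≤ n) :
    {g | g ∈ Ksub n ∧ actFlag n g (FyFlag n) = FyFlag n} =
      {g : (Fin n → ℂ) ≃ₗ[ℂ] (Fin n → ℂ) |
        g (stdVec n (n - 1)) = stdVec n (n - 1) ∧ g (stdVec n n) = stdVec n n ∧
          ∀ k, 1 ≤ k → k ≤ n - 2 →
            Submodule.map g.toLinearMap (stdSub n k) = stdSub n k} := by
  ext g
  simp only [Set.mem_setOf_eq, Ksub]
  constructor
  · rintro ⟨⟨hgn, hU⟩, hF⟩
    have hF' : ∀ k, k ≤ n - 2 → ∀ x ∈ FyFlag n (k + 1),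
        g x ∈ span ℂ {stdVec n (n - 1) + stdVec n n} ⊔ stdSub n k := by
      intro k hk x hx
      rw [← aux_flag n hn k hk, ← congrFun hF (k + 1)]
      exact Submodule.mem_map_of_mem hx
    have hU' : ∀ x ∈ stdSub n (n - 1), g x ⟨n - 1, by omega⟩ = 0 := by
      intro x hx
      apply aux_last_sub n hn (n - 1) le_rfl
      rw [← hU]
      exact Submodule.mem_map_of_mem hx
    refine ⟨?_, hgn, ?_⟩
    · have h1 := hF' 0 (by omega) (stdVec n (n - 1) + stdVec n n) (by
        rw [aux_flag n hn 0 (by omega)]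
        exact mem_sup_left (mem_span_singleton_self _))
      rw [aux_stdSub_zero, sup_bot_eq, mem_span_singleton] at h1
      obtain ⟨c, hc⟩ := h1
      rw [map_add, hgn] at hc
      have h2 := hU' (stdVec n (n - 1))
        (subset_span ⟨n - 1, ⟨by omega, le_rfl⟩, rfl⟩)
      have h3 := congrFun hc ⟨n - 1, by omega⟩
      simp only [Pi.smul_apply, Pi.add_apply, h2, aux_last_self n hn,
        aux_last_ne n hn (n - 1) le_rfl, smul_eq_mul, zero_add, mul_one] at h3
      rw [h3, one_smul] at hc
      exact (add_right_cancel hc).symm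
    · intro k hk1 hk
      apply Submodule.eq_of_le_of_finrank_eq
      · rintro _ ⟨x, hx, rfl⟩
        have h1 := hF' k hk x (by
          rw [aux_flag n hn k hk]
          exact mem_sup_right hx)
        obtain ⟨y, hy, u, hu, hyu⟩ := mem_sup.1 h1
        obtain ⟨a, rfl⟩ := mem_span_singleton.1 hy
        have h2 := hU' x (aux_sub_mono n (by omega) hx)
        have h3 := congrFun hyu ⟨n - 1, by omega⟩
        simp only [Pi.smul_apply, Pi.add_apply, h2, aux_last_self n hn,
          aux_last_ne n hn (n - 1) le_rfl, smul_eq_mul, zero_add, mul_one,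
          aux_last_sub n hn k (by omega) u hu, add_zero] at h3
        rw [h3, zero_smul, zero_add] at hyu
        change g x ∈ _
        rw [← hyu]
        exact hu
      · exact LinearEquiv.finrank_map_eq g _
  · rintro ⟨h1, h2, h3⟩
    have hw : g (stdVec n (n - 1) + stdVec n n) = stdVec n (n - 1) + stdVec n n := by
      rw [map_add, h1, h2]
    have hlow : ∀ k, k ≤ n - 2 →
        Submodule.map g.toLinearMap (FyFlag n (k + 1)) = FyFlag n (k + 1) := by
      intro k hk
      rw [aux_flag n hn k hk, Submodule.map_sup, aux_map_single g _ hw]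
      rcases Nat.eq_zero_or_pos k with rfl | hk0
      · rw [aux_stdSub_zero, Submodule.map_bot]
      · rw [h3 k hk0 hk]
    refine ⟨⟨h2, ?_⟩, ?_⟩
    · rw [aux_sub_succ n hn, Submodule.map_sup, aux_map_single g _ h1,
        h3 (n - 2) (by omega) le_rfl]
    · funext k
      unfold actFlag
      rcases Nat.eq_zero_or_pos k with rfl | hk0
      · rw [aux_flag_zero, Submodule.map_bot]
      · rcases Nat.lt_or_ge k n with hkn | hkn
        · obtain ⟨m, rfl⟩ : ∃ m, k = m + 1 := ⟨k - 1, by omega⟩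
          exact hlow m (by omega)
        · have h4 := hlow (n - 2) le_rfl
          rw [show n - 2 + 1 = n - 1 by omega] at h4
          rw [aux_flag_top n hn k hkn, Submodule.map_sup, aux_map_single g _ h2, h4]
end
end

section
/- Let F'_y be the maximal isotropic flag (ı e_l + √2 ı e_0 - ı e_{-l} ⊂ e_1 ⊂ e_2 ⊂ ⋯ ⊂ e_{l-1}) in ℂ^{2l+1}. Then the stabilizer of F'_y in K, namely {g ∈ K : g·F'_y = F'_y}, equals B_{2l-1} := {g ∈ SO(2l+1) : g e_0 = e_0, g(e_l - e_{-l}) = e_l - e_{-l}, and the matrix of g with respect to the ordered basis (e_1,…,e_l,e_0,e_{-l},…,e_{-1}) is upper triangular} (B_{2l-1} is a Borel subgroup of the copy of SO(2l-1) inside K). -/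
open Module Submodule

noncomputable section

/-- `K = {g ∈ SO(2l+1) : g e_0 = e_0}` (here `e_0 = e_{l+1}`), a copy of `SO(2l)`. -/
def Kodd (l : ℕ) : Set ((Fin (2 * l + 1) → ℂ) ≃ₗ[ℂ] (Fin (2 * l + 1) → ℂ)) :=
  {g | g ∈ SOgrp (2 * l + 1) ∧
       g (stdVec (2 * l + 1) (l + 1)) = stdVec (2 * l + 1) (l + 1)}

/-- `V'` lies in the `K`-orbit of `V`. -/
def InKOddOrbit (l : ℕ) (V V' : ℕ → Submodule ℂ (Fin (2 * l + 1) → ℂ)) : Prop :=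
  ∃ g ∈ Kodd l, actFlag (2 * l + 1) g V = V'

/-- The maximal isotropic flag
`F'_y = (ı e_l + √2 ı e_0 - ı e_{-l} ⊂ e_1 ⊂ e_2 ⊂ ⋯ ⊂ e_{l-1})` in `ℂ^{2l+1}`. -/
def FyOddVec (l m : ℕ) : Fin (2 * l + 1) → ℂ :=
  if m = 1 then
    Complex.I • stdVec (2 * l + 1) l +
      ((Real.sqrt 2 : ℂ) * Complex.I) • stdVec (2 * l + 1) (l + 1) -
      Complex.I • stdVec (2 * l + 1) (l + 2)
  else stdVec (2 * l + 1) (m - 1)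

def FyOddFlag (l : ℕ) : ℕ → Submodule ℂ (Fin (2 * l + 1) → ℂ) :=
  isoFlagOf (2 * l + 1) l (FyOddVec l)

/-- `B_{2l-1}`: elements of `SO(2l+1)` fixing `e_0` and `e_l - e_{-l}` whose matrix in the
ordered basis `(e_1, …, e_l, e_0, e_{-l}, …, e_{-1})` (the standard ordered basis) is
upper triangular; a Borel subgroup of the copy of `SO(2l-1)` inside `K`. -/
def BOddSmall (l : ℕ) : Set ((Fin (2 * l + 1) → ℂ) ≃ₗ[ℂ] (Fin (2 * l + 1) → ℂ)) :=
  {g | g ∈ SOgrp (2 * l + 1) ∧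
       g (stdVec (2 * l + 1) (l + 1)) = stdVec (2 * l + 1) (l + 1) ∧
       g (stdVec (2 * l + 1) l - stdVec (2 * l + 1) (l + 2)) =
         stdVec (2 * l + 1) l - stdVec (2 * l + 1) (l + 2) ∧
       ∀ m, 1 ≤ m → m ≤ 2 * l + 1 →
         g (stdVec (2 * l + 1) m) ∈ stdSub (2 * l + 1) m}

theorem stdVec_eq (n : ℕ) (j : Fin n) : stdVec n (j.val + 1) = Pi.single j 1 := by
  have h : 1 ≤ j.val + 1 ∧ j.val + 1 ≤ n := ⟨by omega, j.2⟩
  simp [stdVec]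
  

theorem mem_stdSub (n k : ℕ) (x : Fin n → ℂ) :
    x ∈ stdSub n k ↔ ∀ i : Fin n, k ≤ i.val → x i = 0 := by
  constructor
  · intro hx
    induction hx using Submodule.span_induction with
    | mem x hx =>
      obtain ⟨m, ⟨h1, h2⟩, rfl⟩ := hx
      intro i hi
      unfold stdVec
      split_ifs with h
      · rw [Pi.single_apply, if_neg]
        intro h3
        have := congrArg Fin.val h3
        simp at this
        omega
      · rfl
    | zero => simp
    | add x y _ _ hx hy => intro i hi; simp [hx i hi, hy i hi]
    | smul a x _ hx => intro i hi; simp [hx i hi]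
  · intro hx
    rw [← Finset.univ_sum_single x]
    refine Submodule.sum_mem _ fun i _ => ?_
    by_cases hi : k ≤ i.val
    · rw [hx i hi]; simp
    · have : (Pi.single i (x i) : Fin n → ℂ) = x i • stdVec n (i.val + 1) := by
        rw [stdVec_eq, ← Pi.single_smul]; simp
      rw [this]
      exact Submodule.smul_mem _ _ (Submodule.subset_span ⟨_, ⟨by omega, by omega⟩, rfl⟩)

theorem betaF_single (n : ℕ) (x : Fin n → ℂ) (j : Fin n) :
    betaF n x (Pi.single j 1) = x j.rev := by
  unfold betaF
  rw [Finset.sum_eq_single j.rev]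
  · simp
  · intro b _ hb
    rw [Pi.single_apply, if_neg, mul_zero]
    intro h; apply hb; rw [← h]; simp
  · simp

theorem betaF_sub (n : ℕ) (x y z : Fin n → ℂ) :
    betaF n x (y - z) = betaF n x y - betaF n x z := by
  simp [betaF, mul_sub]

theorem single_beta (n : ℕ) (x : Fin n → ℂ) (j : Fin n) :
    betaF n (Pi.single j 1) x = x j.rev := by
  unfold betaF
  rw [Finset.sum_eq_single j]
  · simp
  · intro b _ hb
    rw [Pi.single_apply, if_neg hb, zero_mul]
  · simp

theorem det_one_aux (n : ℕ) (N : Matrix (Fin n) (Fin n) ℂ)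
    (htri : ∀ i j, j < i → N i j = 0)
    (hb : ∀ i, ∑ k, N k i * N k.rev i.rev = 1)
    (hm : ∀ i : Fin n, i.rev = i → N i i = 1) : N.det = 1 := by
  rw [Matrix.det_of_upperTriangular (fun i j h => htri i j h)]
  refine Finset.prod_involution (fun i _ => i.rev) ?_ ?_ ?_ ?_
  · intro i _
    rw [← hb i]
    symm
    apply Finset.sum_eq_single
    · intro k _ hk
      rcases lt_or_gt_of_ne hk with h | h
      · rw [htri k.rev i.rev (Fin.rev_lt_rev.2 h), mul_zero]
      · rw [htri k i h, zero_mul]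
    · simp
  · intro i _ h h2
    exact h (hm i h2)
  · simp
  · simp

theorem map_eq_of_le {n : ℕ} (g : (Fin n → ℂ) ≃ₗ[ℂ] (Fin n → ℂ))
    (V : Submodule ℂ (Fin n → ℂ)) (h : V.map g.toLinearMap ≤ V) :
    V.map g.toLinearMap = V :=
  Submodule.eq_of_le_of_finrank_eq h (LinearEquiv.finrank_map_eq g V)

theorem FyOddVec_one (l : ℕ) : FyOddVec l 1 =
    Complex.I • (stdVec (2 * l + 1) l - stdVec (2 * l + 1) (l + 2)) +
      ((Real.sqrt 2 : ℂ) * Complex.I) • stdVec (2 * l + 1) (l + 1) := by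
  simp only [FyOddVec, if_true, smul_sub]
  abel

theorem flag_le (l k : ℕ) (hk : k ≤ l) :
    FyOddFlag l k ≤ span ℂ {FyOddVec l 1} ⊔ stdSub (2 * l + 1) (k - 1) := by
  unfold FyOddFlag isoFlagOf
  rw [Submodule.span_le]
  rintro _ ⟨m, ⟨h1, h2⟩, rfl⟩
  by_cases hm : m = 1
  · subst hm
    exact Submodule.mem_sup_left (Submodule.mem_span_singleton_self _)
  · apply Submodule.mem_sup_right
    simp only [FyOddVec, if_neg hm]
    exact Submodule.subset_span ⟨m - 1, ⟨by omega, by omega⟩, rfl⟩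

theorem backward (l : ℕ) (hl : 2 ≤ l) (g) (hg : g ∈ BOddSmall l) :
    g ∈ Kodd l ∧ actFlag (2 * l + 1) g (FyOddFlag l) = FyOddFlag l := by
  obtain ⟨hso, h0, h1, ht⟩ := hg
  refine ⟨⟨hso, h0⟩, ?_⟩
  funext k
  apply map_eq_of_le
  unfold FyOddFlag isoFlagOf
  rw [Submodule.map_span_le]
  rintro _ ⟨m, ⟨hm1, hm2⟩, rfl⟩
  by_cases hm : m = 1
  · subst hm
    have : g.toLinearMap (FyOddVec l 1) = FyOddVec l 1 := by
      rw [FyOddVec_one]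
      simp only [LinearEquiv.coe_coe, map_add, map_smul, h0, h1]
    rw [this]
    exact Submodule.subset_span ⟨1, ⟨hm1, hm2⟩, rfl⟩
  · have h2 := ht (m - 1) (by omega) (by omega)
    have h3 : stdSub (2 * l + 1) (m - 1) ≤
        span ℂ (FyOddVec l '' Set.Icc 1 (min k l)) := by
      unfold stdSub
      rw [Submodule.span_le]
      rintro _ ⟨p, ⟨hp1, hp2⟩, rfl⟩
      refine Submodule.subset_span ⟨p + 1, ⟨by omega, by omega⟩, ?_⟩
      simp [FyOddVec, show p ≠ 0 by omega]
    apply h3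
    simpa only [FyOddVec, if_neg hm, LinearEquiv.coe_coe] using h2

theorem forward (l : ℕ) (hl : 2 ≤ l) (g) (hg : g ∈ Kodd l)
    (hf : actFlag (2 * l + 1) g (FyOddFlag l) = FyOddFlag l) : g ∈ BOddSmall l := by
  obtain ⟨⟨hdet, hb⟩, h0⟩ := hg
  -- indices (0-based)
  obtain ⟨P, hP⟩ : ∃ P : Fin (2 * l + 1), P.val = l - 1 := ⟨⟨l - 1, by omega⟩, rfl⟩
  obtain ⟨Z, hZ⟩ : ∃ Z : Fin (2 * l + 1), Z.val = l := ⟨⟨l, by omega⟩, rfl⟩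
  obtain ⟨Q, hQ⟩ : ∃ Q : Fin (2 * l + 1), Q.val = l + 1 := ⟨⟨l + 1, by omega⟩, rfl⟩
  have eP : stdVec (2 * l + 1) l = Pi.single P 1 := by
    rw [← stdVec_eq, hP]; congr 1; omega
  have eZ : stdVec (2 * l + 1) (l + 1) = Pi.single Z 1 := by rw [← stdVec_eq, hZ]
  have eQ : stdVec (2 * l + 1) (l + 2) = Pi.single Q 1 := by rw [← stdVec_eq, hQ]
  have rP : P.rev = Q := by ext; rw [Fin.val_rev]; omega
  have rQ : Q.rev = P := by ext; rw [Fin.val_rev]; omega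
  have rZ : Z.rev = Z := by ext; rw [Fin.val_rev]; omega
  have hPQ : P ≠ Q := by intro h; have := congrArg Fin.val h; omega
  have hPZ : P ≠ Z := by intro h; have := congrArg Fin.val h; omega
  have hQZ : Q ≠ Z := by intro h; have := congrArg Fin.val h; omega
  rw [eZ] at h0
  have hmid : ∀ x, (g x) Z = x Z := by
    intro x
    have := hb x (Pi.single Z 1)
    rwa [h0, betaF_single, betaF_single, rZ] at this
  have hmap : ∀ k, ∀ x ∈ FyOddFlag l k, g x ∈ FyOddFlag l k := by
    intro k x hx
    rw [← congrFun hf k]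
    exact ⟨x, hx, rfl⟩
  have hvZ : FyOddVec l 1 Z = (Real.sqrt 2 : ℂ) * Complex.I := by
    rw [FyOddVec_one, eP, eZ, eQ]
    simp [hPZ.symm, hQZ.symm]
  have hne : (Real.sqrt 2 : ℂ) * Complex.I ≠ 0 := by
    apply mul_ne_zero _ Complex.I_ne_zero
    exact_mod_cast (Real.sqrt_pos.2 (by norm_num : (0:ℝ) < 2)).ne'
  have hdec : ∀ k, k ≤ l → ∀ x ∈ FyOddFlag l k, x Z = 0 → x ∈ stdSub (2 * l + 1) (k - 1) := by
    intro k hk x hx hxZ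
    obtain ⟨y, hy, z, hz, rfl⟩ := Submodule.mem_sup.1 (flag_le l k hk hx)
    obtain ⟨a, rfl⟩ := Submodule.mem_span_singleton.1 hy
    have hzZ : z Z = 0 := (mem_stdSub _ _ _).1 hz Z (by omega)
    simp only [Pi.add_apply, Pi.smul_apply, hzZ, add_zero, hvZ, smul_eq_mul] at hxZ
    have : a = 0 := by simpa [hne] using hxZ
    simpa [this] using hz
  -- g fixes the first vector
  have hv : g (FyOddVec l 1) = FyOddVec l 1 := by
    have hmem : FyOddVec l 1 ∈ FyOddFlag l 1 :=
      Submodule.subset_span ⟨1, ⟨le_refl _, by omega⟩, rfl⟩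
    have h1 := hdec 1 (by omega) (g (FyOddVec l 1) - FyOddVec l 1)
      (Submodule.sub_mem _ (hmap 1 _ hmem) hmem) (by simp [hmid])
    rw [mem_stdSub] at h1
    funext i
    exact sub_eq_zero.1 (h1 i (by omega))
  have hPmQ : g (Pi.single P 1 - Pi.single Q 1) = Pi.single P 1 - Pi.single Q 1 := by
    rw [FyOddVec_one, eP, eZ, eQ, map_add, map_smul, map_smul, h0] at hv
    exact smul_right_injective _ Complex.I_ne_zero (add_right_cancel hv)
  have hlow : ∀ j : Fin (2 * l + 1), j.val < l - 1 → ∀ i, j < i → g (Pi.single j 1) i = 0 := by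
    intro j hj i hi
    have hmem : (Pi.single j 1 : Fin (2 * l + 1) → ℂ) ∈ FyOddFlag l (j.val + 2) := by
      refine Submodule.subset_span ⟨j.val + 2, ⟨by omega, by omega⟩, ?_⟩
      rw [← stdVec_eq]
      simp [FyOddVec]
    have hjZ : Z ≠ j := by intro h; have := congrArg Fin.val h; omega
    have h1 := hdec _ (by omega) _ (hmap _ _ hmem) (by rw [hmid]; simp [hjZ])
    rw [mem_stdSub] at h1
    exact h1 i (by rw [Fin.lt_def] at hi; omega)
  have hsub : ∀ k, k ≤ l - 1 → (stdSub (2 * l + 1) k).map g.toLinearMap = stdSub (2 * l + 1) k := by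
    intro k hk
    apply map_eq_of_le
    unfold stdSub
    rw [Submodule.map_span_le]
    rintro _ ⟨m, ⟨hm1, hm2⟩, rfl⟩
    change _ ∈ stdSub (2 * l + 1) k
    rw [mem_stdSub]
    intro i hi
    have : stdVec (2 * l + 1) m = Pi.single ⟨m - 1, by omega⟩ 1 := by
      rw [← stdVec_eq]; congr 1; simp; omega
    rw [this]
    exact hlow _ (by simp; omega) i (by rw [Fin.lt_def]; simp; omega)
  have hhigh : ∀ i j : Fin (2 * l + 1), l + 1 < i.val → j < i → g (Pi.single j 1) i = 0 := by
    intro i j hi hj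
    have hri : i.rev.val = 2 * l - i.val := by rw [Fin.val_rev]; omega
    have hrj : j.rev.val = 2 * l - j.val := by rw [Fin.val_rev]; omega
    have hmem : (Pi.single i.rev 1 : Fin (2 * l + 1) → ℂ) ∈ stdSub (2 * l + 1) (i.rev.val + 1) := by
      rw [← stdVec_eq]
      exact Submodule.subset_span ⟨_, ⟨by omega, le_refl _⟩, rfl⟩
    rw [← hsub _ (by omega)] at hmem
    obtain ⟨y, hy, hgy⟩ := hmem
    have h1 := hb (Pi.single j 1) y
    rw [show g y = Pi.single i.rev 1 from hgy, betaF_single, single_beta, Fin.rev_rev] at h1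
    rw [h1]
    exact (mem_stdSub _ _ _).1 hy _ (by rw [Fin.lt_def] at hj; omega)
  -- the middle column
  have hxZ : g (Pi.single P 1) Z = 0 := by rw [hmid]; simp [hPZ.symm]
  have hxhigh : ∀ i : Fin (2 * l + 1), l + 1 < i.val → g (Pi.single P 1) i = 0 :=
    fun i hi => hhigh i P hi (by rw [Fin.lt_def]; omega)
  have hca : g (Pi.single P 1) Q - g (Pi.single P 1) P = -1 := by
    have h1 := hb (Pi.single P 1) (Pi.single P 1 - Pi.single Q 1)
    rw [hPmQ, betaF_sub, betaF_sub, betaF_single, betaF_single, betaF_single, betaF_single,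
      rP, rQ] at h1
    rw [h1]; simp [hPQ.symm]
  have hac : g (Pi.single P 1) P * g (Pi.single P 1) Q = 0 := by
    have h1 := hb (Pi.single P 1) (Pi.single P 1)
    rw [betaF_single, rP, Pi.single_eq_of_ne hPQ.symm] at h1
    unfold betaF at h1
    rw [← Finset.sum_subset (Finset.subset_univ {P, Q})] at h1
    · rw [Finset.sum_pair hPQ, rP, rQ] at h1
      linear_combination h1 / 2
    · intro k _ hk
      simp only [Finset.mem_insert, Finset.mem_singleton, not_or] at hk
      by_cases hkZ : k = Z
      · rw [hkZ, hxZ, zero_mul]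
      by_cases hk2 : l + 1 < k.val
      · rw [hxhigh k hk2, zero_mul]
      · rw [hxhigh k.rev, mul_zero]
        rw [Fin.val_rev]
        have a1 : k.val ≠ P.val := fun h => hk.1 (Fin.ext h)
        have a2 : k.val ≠ Q.val := fun h => hk.2 (Fin.ext h)
        have a3 : k.val ≠ Z.val := fun h => hkZ (Fin.ext h)
        omega
  have hxQ : g (Pi.single P 1) Q = 0 := by
    by_contra hc
    have ha : g (Pi.single P 1) P = 0 := by
      rcases mul_eq_zero.1 hac with h | h
      · exact h
      · exact absurd h hc
    set M : Matrix (Fin (2 * l + 1)) (Fin (2 * l + 1)) ℂ := LinearMap.toMatrix' g.toLinearMap with hM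
    have hMa : ∀ i j, M i j = g (Pi.single j 1) i := by
      intro i j
      rw [hM, LinearMap.toMatrix'_apply]
      rfl
    have hMdet : M.det = 1 := by rw [hM, LinearMap.det_toMatrix', hdet]
    set σ : Equiv.Perm (Fin (2 * l + 1)) := Equiv.swap P Q with hσ
    have hσP : σ P = Q := Equiv.swap_apply_left _ _
    have hσQ : σ Q = P := Equiv.swap_apply_right _ _
    have hσo : ∀ i, i ≠ P → i ≠ Q → σ i = i := fun i h1 h2 => Equiv.swap_apply_of_ne_of_ne h1 h2
    have hσr : ∀ k, σ k.rev = (σ k).rev := by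
      intro k
      by_cases h1 : k = P
      · rw [h1, rP, hσQ, hσP, rQ]
      by_cases h2 : k = Q
      · rw [h2, rQ, hσQ, hσP, rP]
      rw [hσo k h1 h2, hσo]
      · intro h; apply h2; rw [← rP, ← h, Fin.rev_rev]
      · intro h; apply h1; rw [← rQ, ← h, Fin.rev_rev]
    have hN : (M.submatrix σ id).det = 1 := by
      apply det_one_aux
      · intro i j hij
        simp only [Matrix.submatrix_apply, id, hMa]
        rw [Fin.lt_def] at hij
        rcases lt_trichotomy j.val (l - 1) with h | h | h
        · apply hlow j h
          rw [Fin.lt_def]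
          by_cases h1 : i = P
          · rw [h1, hσP]; omega
          by_cases h2 : i = Q
          · rw [h2, hσQ]; omega
          rw [hσo i h1 h2]; exact hij
        · have hjP : j = P := Fin.ext (by omega)
          rw [hjP]
          by_cases h2 : i = Q
          · rw [h2, hσQ, ha]
          have h1 : i ≠ P := by rintro rfl; omega
          rw [hσo i h1 h2]
          by_cases h3 : i = Z
          · rw [h3, hxZ]
          apply hxhigh
          have a2 : i.val ≠ Q.val := fun h => h2 (Fin.ext h)
          have a3 : i.val ≠ Z.val := fun h => h3 (Fin.ext h)
          omega
        · by_cases hjZ : j = Z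
          · rw [hjZ, h0]
            apply Pi.single_eq_of_ne
            intro h4
            have h5 : σ Z = Z := hσo Z hPZ.symm hQZ.symm
            have : i = Z := σ.injective (h4.trans h5.symm)
            rw [this, hjZ] at hij
            omega
          · have a3 : j.val ≠ Z.val := fun h => hjZ (Fin.ext h)
            have h1 : i ≠ P := by rintro rfl; omega
            have h2 : i ≠ Q := by rintro rfl; omega
            rw [hσo i h1 h2]
            exact hhigh i j (by omega) hij
      · intro i
        simp only [Matrix.submatrix_apply, id, hMa, hσr]
        rw [Equiv.sum_comp σ (fun k => g (Pi.single i 1) k * g (Pi.single i.rev 1) k.rev)]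
        have h1 := hb (Pi.single i 1) (Pi.single i.rev 1)
        rw [betaF_single, Fin.rev_rev, Pi.single_eq_same] at h1
        exact h1
      · intro i hi
        have : i = Z := by
          have := congrArg Fin.val hi
          rw [Fin.val_rev] at this
          exact Fin.ext (by omega)
        rw [this]
        simp only [Matrix.submatrix_apply, id, hMa]
        rw [hσo Z hPZ.symm hQZ.symm, h0, Pi.single_eq_same]
    rw [Matrix.det_permute, hMdet, hσ, Equiv.Perm.sign_swap hPQ] at hN
    norm_num at hN
  refine ⟨⟨hdet, hb⟩, by rw [eZ, h0], by rw [eP, eQ, hPmQ], ?_⟩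
  intro m hm1 hm2
  obtain ⟨j, rfl⟩ : ∃ j : Fin (2 * l + 1), m = j.val + 1 := ⟨⟨m - 1, by omega⟩, by simp; omega⟩
  rw [stdVec_eq, mem_stdSub]
  intro i hi
  have hij : j < i := by rw [Fin.lt_def]; omega
  rcases lt_trichotomy j.val (l - 1) with h | h | h
  · exact hlow j h i hij
  · have hjP : j = P := Fin.ext (by omega)
    rw [hjP]
    by_cases h2 : i = Q
    · rw [h2, hxQ]
    by_cases h3 : i = Z
    · rw [h3, hxZ]
    apply hxhigh
    have a2 : i.val ≠ Q.val := fun h => h2 (Fin.ext h)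
    have a3 : i.val ≠ Z.val := fun h => h3 (Fin.ext h)
    omega
  · by_cases hjZ : j = Z
    · rw [hjZ, h0]
      apply Pi.single_eq_of_ne
      rintro rfl
      rw [hjZ] at hij
      exact lt_irrefl _ hij
    · have a3 : j.val ≠ Z.val := fun h => hjZ (Fin.ext h)
      exact hhigh i j (by omega) hij

/-- The stabilizer of `F'_y` in `K` is the Borel subgroup `B_{2l-1}`. -/
theorem stmt_7 (l : ℕ) (hl : 2 ≤ l) :
    {g | g ∈ Kodd l ∧ actFlag (2 * l + 1) g (FyOddFlag l) = FyOddFlag l} = BOddSmall l := by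
  ext g
  exact ⟨fun h => forward l hl g h.1 h.2, fun h => backward l hl g h⟩
end
end
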